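/- Let E be a Riesz space whose dimension as a real vector space is at least 2. Then E contains a principal band B with B ≠ {0} and B ≠ E. -/

import Mathlib

/-- A (Riesz) ideal of an ordered real vector space: a submodule `I` such that
`|x| ≤ |y|` and `y ∈ I` imply `x ∈ I`. -/
def IsRieszIdeal {E : Type*} [AddCommGroup E] [Lattice E] [Module ℝ E]
    (I : Submodule ℝ E) : Prop :=
  ∀ x y : E, |x| ≤ |y| → y ∈ I → x ∈ I

/-- A band: an ideal closed under suprema of its subsets (when they exist in `E`). -/
def IsBand {E : Type*} [AddCommGroup E] [Lattice E] [Module ℝ E]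
    (B : Submodule ℝ E) : Prop :=
  IsRieszIdeal B ∧ ∀ (D : Set E) (x : E), D ⊆ (B : Set E) → IsLUB D x → x ∈ B

/-- The disjoint complement of a set `D`. -/
def disjComplement {E : Type*} [AddCommGroup E] [Lattice E] (D : Set E) : Set E :=
  {x : E | ∀ y ∈ D, |x| ⊓ |y| = 0}

/-- A projection band: a band `B` with `E = B ⊕ Bᵈ`. -/
def IsProjectionBand {E : Type*} [AddCommGroup E] [Lattice E] [Module ℝ E]
    (B : Submodule ℝ E) : Prop :=
  IsBand B ∧ ∀ x : E, ∃ y ∈ B, ∃ z ∈ disjComplement (B : Set E), x = y + z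

/-- An order direct sum decomposition `E = L ⊕ M`: every element decomposes uniquely
as a sum of an element of `L` and an element of `M`, and an element is positive iff
both its components are positive. -/
def IsOrderDecomposition {E : Type*} [AddCommGroup E] [Lattice E] [Module ℝ E]
    (L M : Submodule ℝ E) : Prop :=
  (∀ x : E, ∃ y ∈ L, ∃ z ∈ M, x = y + z) ∧
  (∀ x : E, x ∈ L → x ∈ M → x = 0) ∧
  (∀ y z : E, y ∈ L → z ∈ M → (0 ≤ y + z ↔ 0 ≤ y ∧ 0 ≤ z))

/-- A homomorphism `ρ : G →* (E ≃ₗ[ℝ] E)` is a positive representation when each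
`ρ s` is an order isomorphism (hence a lattice automorphism). -/
def IsPositiveRep {E : Type*} [AddCommGroup E] [Lattice E] [Module ℝ E]
    {G : Type*} [Group G] (ρ : G →* (E ≃ₗ[ℝ] E)) : Prop :=
  ∀ (s : G) (x y : E), x ≤ y ↔ ρ s x ≤ ρ s y

/-- A submodule is `ρ`-invariant if it is mapped into itself by every `ρ s`. -/
def InvariantSubmodule {E : Type*} [AddCommGroup E] [Lattice E] [Module ℝ E]
    {G : Type*} [Group G] (ρ : G →* (E ≃ₗ[ℝ] E)) (B : Submodule ℝ E) : Prop :=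
  ∀ (s : G), ∀ x ∈ B, ρ s x ∈ B

/-- `ρ` is order indecomposable if the only `ρ`-invariant order direct sum
decompositions `E = L ⊕ M` are the trivial ones. -/
def OrderIndecomposable {E : Type*} [AddCommGroup E] [Lattice E] [Module ℝ E]
    {G : Type*} [Group G] (ρ : G →* (E ≃ₗ[ℝ] E)) : Prop :=
  ∀ L M : Submodule ℝ E, IsOrderDecomposition L M →
    InvariantSubmodule ρ L → InvariantSubmodule ρ M → L = ⊥ ∨ L = ⊤

/-- `ρ` is projection band irreducible if the only `ρ`-invariant projection bands
are `{0}` and `E`. -/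
def ProjectionBandIrreducible {E : Type*} [AddCommGroup E] [Lattice E] [Module ℝ E]
    {G : Type*} [Group G] (ρ : G →* (E ≃ₗ[ℝ] E)) : Prop :=
  ∀ B : Submodule ℝ E, IsProjectionBand B → InvariantSubmodule ρ B → B = ⊥ ∨ B = ⊤


/-- A principal band: the band generated by a single element, i.e. the smallest band
containing some element `x`. -/
def IsPrincipalBand {E : Type*} [AddCommGroup E] [Lattice E] [Module ℝ E]
    (B : Submodule ℝ E) : Prop :=
  IsBand B ∧ ∃ x ∈ B, ∀ C : Submodule ℝ E, IsBand C → x ∈ C → B ≤ C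

/-!
A Riesz space whose only bands are `{0}` and `E` is at most one-dimensional. Indeed `u⁺` lies in the
band `{u⁻}ᵈ`, and `u⁻` does so only if it vanishes, so `u⁺ = 0` or `u⁻ = 0` and the order is total.
The elements infinitesimal with respect to some `y ≠ 0` form a band which does not contain `y`,
hence is `{0}`, so the order is Archimedean. Now fix `e > 0`: for every `x` there is a real number
`c`, the supremum of all `t` with `t • e ≤ x`, such that `x - c • e` is infinitesimal with respect
to `e`, that is, `x = c • e`.
-/

open LatticeOrderedAddCommGroup (IsSolid)

section LatticeOrderedGroup

variable {E : Type*} [AddCommGroup E] [Lattice E] [IsOrderedAddMonoid E]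

theorem eq_zero_of_abs_nonpos {x : E} (hx : |x| ≤ 0) : x = 0 :=
  le_antisymm ((le_abs_self x).trans hx) (neg_nonpos.1 ((neg_le_abs x).trans hx))

theorem eq_zero_of_isBot {s : E} (hs : IsBot s) : s = 0 :=
  le_antisymm (hs 0) (le_add_iff_nonneg_right s |>.1 (hs (s + s)))

theorem inf_le_of_isLUB {D : Set E} {s v w : E} (hs : IsLUB D s) (hD : ∀ d ∈ D, d ⊓ v ≤ w) :
    s ⊓ v ≤ w := by
  have hsup : s ≤ w + s ⊔ v - v := hs.2 fun d hd => by
    rw [le_sub_iff_add_le, ← inf_add_sup]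
    exact add_le_add (hD d hd) (sup_le_sup_right (hs.1 hd) v)
  rwa [le_sub_iff_add_le, ← inf_add_sup, add_le_add_iff_right] at hsup

theorem add_inf_le_inf_add_inf {a b v : E} (ha : 0 ≤ a) (hb : 0 ≤ b) (hv : 0 ≤ v) :
    (a + b) ⊓ v ≤ a ⊓ v + b ⊓ v := by
  rw [inf_add, add_inf, add_inf]
  exact le_inf (le_inf inf_le_left (inf_le_right.trans (le_add_of_nonneg_left ha)))
    (le_inf (inf_le_right.trans (le_add_of_nonneg_right hb))
      (inf_le_right.trans (le_add_of_nonneg_right hv)))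

theorem mem_disjComplement_iff_le {D : Set E} {x : E} :
    x ∈ disjComplement D ↔ ∀ y ∈ D, |x| ⊓ |y| ≤ 0 :=
  forall₂_congr fun y _ =>
    ⟨le_of_eq, fun h => h.antisymm (le_inf (abs_nonneg x) (abs_nonneg y))⟩

theorem self_mem_disjComplement_singleton_iff {x : E} : x ∈ disjComplement {x} ↔ x = 0 := by
  rw [mem_disjComplement_iff_le]
  exact ⟨fun h => eq_zero_of_abs_nonpos (by simpa using h x rfl), by rintro rfl; simp⟩

theorem posPart_mem_disjComplement_negPart (u : E) : u⁺ ∈ disjComplement {u⁻} := by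
  rintro _ rfl
  rw [abs_of_nonneg (posPart_nonneg u), abs_of_nonneg (negPart_nonneg u),
    posPart_inf_negPart_eq_zero]

theorem isSolid_disjComplement (D : Set E) : IsSolid (disjComplement D) := by
  intro x hx z hz
  rw [mem_disjComplement_iff_le] at hx ⊢
  exact fun y hy => (inf_le_inf_right _ hz).trans (hx y hy)

theorem add_mem_disjComplement {D : Set E} {a b : E} (ha : a ∈ disjComplement D)
    (hb : b ∈ disjComplement D) : a + b ∈ disjComplement D := by
  rw [mem_disjComplement_iff_le]
  intro y hy
  calc |a + b| ⊓ |y| ≤ (|a| + |b|) ⊓ |y| := inf_le_inf_right _ (abs_add_le a b)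
    _ ≤ |a| ⊓ |y| + |b| ⊓ |y| :=
      add_inf_le_inf_add_inf (abs_nonneg a) (abs_nonneg b) (abs_nonneg y)
    _ = 0 := by rw [ha y hy, hb y hy, add_zero]

theorem mem_disjComplement_of_isLUB {A D : Set E} {s : E} (hA : A.Nonempty)
    (hAD : A ⊆ disjComplement D) (hs : IsLUB A s) : s ∈ disjComplement D := by
  obtain ⟨a, ha⟩ := hA
  rw [mem_disjComplement_iff_le]
  intro y hy
  have habs : IsLUB (A ∪ {-s}) |s| := hs.union isLUB_singleton
  refine inf_le_of_isLUB habs ?_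
  rintro d (hd | rfl)
  · exact (inf_le_inf_right _ (le_abs_self d)).trans (hAD hd y hy).le
  · have hsa : -s ≤ |a| := (neg_le_neg (hs.1 ha)).trans (neg_le_abs a)
    exact (inf_le_inf_right _ hsa).trans (hAD ha y hy).le

end LatticeOrderedGroup

section Bands

variable {E : Type*} [AddCommGroup E] [Lattice E] [Module ℝ E]

theorem isBand_sInf {S : Set (Submodule ℝ E)} (hS : ∀ B ∈ S, IsBand B) : IsBand (sInf S) := by
  refine ⟨fun x y hxy hy => ?_, fun D s hD hs => ?_⟩
  · rw [Submodule.mem_sInf] at hy ⊢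
    exact fun B hB => (hS B hB).1 x y hxy (hy B hB)
  · rw [Submodule.mem_sInf]
    exact fun B hB => (hS B hB).2 D s (fun d hd => Submodule.mem_sInf.1 (hD hd) B hB) hs

/-- The band generated by `x`, encoded as the intersection of all bands containing `x`. -/
def principalBand (x : E) : Submodule ℝ E :=
  sInf {B | IsBand B ∧ x ∈ B}

theorem mem_principalBand_self (x : E) : x ∈ principalBand x :=
  Submodule.mem_sInf.2 fun _ hB => hB.2

theorem principalBand_le {B : Submodule ℝ E} (hB : IsBand B) {x : E} (hx : x ∈ B) :
    principalBand x ≤ B :=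
  sInf_le ⟨hB, hx⟩

theorem isPrincipalBand_principalBand (x : E) : IsPrincipalBand (principalBand x) :=
  ⟨isBand_sInf fun _ hB => hB.1, x, mem_principalBand_self x, fun _ hB hx => principalBand_le hB hx⟩

variable (E) in
/-- A Riesz space is band simple if `{0}` and the whole space are its only bands. Such a
space is at most one-dimensional. -/
def BandSimple : Prop :=
  ∀ B : Submodule ℝ E, IsBand B → B = ⊥ ∨ B = ⊤

theorem bandSimple_of_forall_isPrincipalBand
    (h : ∀ B : Submodule ℝ E, IsPrincipalBand B → B = ⊥ ∨ B = ⊤) : BandSimple E := by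
  refine fun B hB => or_iff_not_imp_left.2 fun hB_bot => ?_
  obtain ⟨x, hxB, hx⟩ := B.ne_bot_iff.1 hB_bot
  have hx_bot : principalBand x ≠ ⊥ :=
    (principalBand x).ne_bot_iff.2 ⟨x, mem_principalBand_self x, hx⟩
  have hx_top := (h _ (isPrincipalBand_principalBand x)).resolve_left hx_bot
  exact top_le_iff.1 (hx_top ▸ principalBand_le hB hxB)

end Bands

theorem abs_smul_le {R E : Type*} [Ring R] [LinearOrder R] [IsOrderedRing R] [AddCommGroup E]
    [Lattice E] [Module R E] [PosSMulMono R E] (t : R) (x : E) : |t • x| ≤ |t| • |x| := by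
  have abs_smul_le_of_nonneg {s : R} (hs : 0 ≤ s) : |s • x| ≤ s • |x| :=
    abs_le'.2 ⟨smul_le_smul_of_nonneg_left (le_abs_self x) hs,
      (smul_neg s x).symm.trans_le (smul_le_smul_of_nonneg_left (neg_le_abs x) hs)⟩
  obtain ht | ht := le_total 0 t
  · simpa only [abs_of_nonneg ht] using abs_smul_le_of_nonneg ht
  · simpa only [abs_of_nonpos ht, neg_smul, abs_neg] using abs_smul_le_of_nonneg (neg_nonneg.2 ht)

section RieszSpace

variable {E : Type*} [AddCommGroup E] [Lattice E] [IsOrderedAddMonoid E] [Module ℝ E]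
  [IsOrderedModule ℝ E]

/-- A solid additive submonoid of a Riesz space, as a linear subspace: closedness under real scalars
is automatic. It serves to construct ideals. -/
def submoduleOfSolid (S : AddSubmonoid E) (hS : IsSolid (S : Set E)) : Submodule ℝ E where
  __ := S
  smul_mem' t x hx := by
    obtain ⟨n, hn⟩ := exists_nat_ge |t|
    have habs : |x| ∈ S := hS hx (abs_abs x).le
    refine hS (nsmul_mem habs n) ?_
    calc |t • x| ≤ |t| • |x| := abs_smul_le t x
      _ ≤ (n : ℝ) • |x| := smul_le_smul_of_nonneg_right hn (abs_nonneg x)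
      _ = n • |x| := Nat.cast_smul_eq_nsmul ℝ n |x|
      _ ≤ |(n • |x|)| := le_abs_self _

theorem isBand_submoduleOfSolid {S : AddSubmonoid E} (hS : IsSolid (S : Set E))
    (hlub : ∀ (D : Set E) (s : E), D.Nonempty → D ⊆ S → IsLUB D s → s ∈ S) :
    IsBand (submoduleOfSolid S hS) := by
  refine ⟨fun _ _ hxy hy => hS hy hxy, fun D s hD hs => ?_⟩
  obtain rfl | hne := D.eq_empty_or_nonempty
  · rw [eq_zero_of_isBot (isLUB_empty_iff.1 hs)]
    exact zero_mem _
  · exact hlub D s hne hD hs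

/-- The disjoint complement of a set, as a linear subspace. It is the source of bands in a space
which is not totally ordered. -/
def disjComplementSubmodule (D : Set E) : Submodule ℝ E :=
  submoduleOfSolid
    { carrier := disjComplement D
      zero_mem' := mem_disjComplement_iff_le.2 fun y _ => by simp
      add_mem' := add_mem_disjComplement }
    (isSolid_disjComplement D)

theorem isBand_disjComplementSubmodule (D : Set E) : IsBand (disjComplementSubmodule D) :=
  isBand_submoduleOfSolid _ fun _ _ => mem_disjComplement_of_isLUB

/-- The subspace of the elements that are infinitesimal with respect to `y`. These subspaces measure
the failure of the Archimedean property. -/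
def infinitesimals (y : E) : Submodule ℝ E :=
  submoduleOfSolid
    { carrier := {x | ∀ ε : ℝ, 0 < ε → |x| ≤ ε • |y|}
      zero_mem' := fun ε hε => by simpa using smul_nonneg hε.le (abs_nonneg y)
      add_mem' := fun {a b} ha hb ε hε => calc
        |a + b| ≤ |a| + |b| := abs_add_le a b
        _ ≤ (ε / 2) • |y| + (ε / 2) • |y| :=
          add_le_add (ha _ (half_pos hε)) (hb _ (half_pos hε))
        _ = ε • |y| := by rw [← add_smul, add_halves] }
    fun _ hx _ hz ε hε => hz.trans (hx ε hε)

theorem mem_infinitesimals {x y : E} :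
    x ∈ infinitesimals y ↔ ∀ ε : ℝ, 0 < ε → |x| ≤ ε • |y| :=
  Iff.rfl

theorem self_mem_infinitesimals_iff {y : E} : y ∈ infinitesimals y ↔ y = 0 := by
  refine ⟨fun hy => eq_zero_of_abs_nonpos ?_, by rintro rfl; exact zero_mem _⟩
  have hhalf : |y| ≤ (2⁻¹ : ℝ) • |y| := hy _ (by norm_num)
  have htwo : (2 : ℝ) • |y| ≤ |y| := by
    simpa using smul_le_smul_of_nonneg_left hhalf (zero_le_two (α := ℝ))
  rwa [two_smul, add_le_iff_nonpos_left] at htwo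

theorem isBand_infinitesimals (y : E) : IsBand (infinitesimals y) := by
  refine isBand_submoduleOfSolid _ fun D s ⟨d, hd⟩ hD hs ε hε => abs_le'.2 ⟨?_, ?_⟩
  · exact hs.2 fun d hd => (le_abs_self d).trans (hD hd ε hε)
  · exact (neg_le_neg (hs.1 hd)).trans ((neg_le_abs d).trans (hD hd ε hε))

end RieszSpace

theorem exists_sub_smul_mem_infinitesimals {E : Type*} [AddCommGroup E] [LinearOrder E]
    [IsOrderedAddMonoid E] [Module ℝ E] [IsOrderedModule ℝ E] {e x : E} {T : ℝ} (he : 0 < e)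
    (hx : |x| ≤ T • e) : ∃ c : ℝ, x - c • e ∈ infinitesimals e := by
  let S : Set ℝ := {t | t • e ≤ x}
  obtain ⟨hTx, hxT⟩ := abs_le.1 hx
  have : SMulPosStrictMono ℝ E := SMulPosMono.toSMulPosStrictMono
  have hS_nonempty : S.Nonempty := ⟨-T, by simpa [S] using hTx⟩
  have hS_bdd : BddAbove S := ⟨T, fun t ht => le_of_smul_le_smul_right (le_trans ht hxT) he⟩
  refine ⟨sSup S, fun ε hε => ?_⟩
  rw [abs_of_pos he, abs_sub_le_iff, sub_le_iff_le_add, ← add_smul, sub_le_comm, ← sub_smul]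
  constructor
  · have hnotMem : ε + sSup S ∉ S := notMem_of_csSup_lt (lt_add_of_pos_left _ hε) hS_bdd
    exact (not_le.1 hnotMem).le
  · obtain ⟨t, ht, hlt⟩ := exists_lt_of_lt_csSup hS_nonempty (sub_lt_self _ hε)
    exact (smul_le_smul_of_nonneg_right hlt.le he.le).trans ht

namespace BandSimple

variable {E : Type*} [AddCommGroup E] [Lattice E] [IsOrderedAddMonoid E] [Module ℝ E]
  [IsOrderedModule ℝ E]

theorem le_total (hE : BandSimple E) (a b : E) : a ≤ b ∨ b ≤ a := by
  set u := a - b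
  obtain hbot | htop := hE _ (isBand_disjComplementSubmodule {u⁻})
  · have hpos : u⁺ ∈ disjComplementSubmodule {u⁻} := posPart_mem_disjComplement_negPart u
    rw [hbot, Submodule.mem_bot, posPart_eq_zero] at hpos
    exact .inl (sub_nonpos.1 hpos)
  · have hneg : u⁻ ∈ disjComplementSubmodule {u⁻} := htop ▸ Submodule.mem_top
    have hneg_zero : u⁻ = 0 := self_mem_disjComplement_singleton_iff.1 hneg
    exact .inr (sub_nonneg.1 (negPart_eq_zero.1 hneg_zero))

theorem infinitesimals_eq_bot (hE : BandSimple E) {y : E} (hy : y ≠ 0) : infinitesimals y = ⊥ :=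
  (hE _ (isBand_infinitesimals y)).resolve_right fun htop =>
    hy (self_mem_infinitesimals_iff.1 (htop ▸ Submodule.mem_top))

theorem exists_abs_le_smul_abs (hE : BandSimple E) {e : E} (he : e ≠ 0) (x : E) :
    ∃ T : ℝ, |x| ≤ T • |e| := by
  obtain rfl | hx := eq_or_ne x 0
  · exact ⟨0, by simp⟩
  have he_mem : e ∉ infinitesimals x := by
    rwa [hE.infinitesimals_eq_bot hx, Submodule.mem_bot]
  rw [mem_infinitesimals] at he_mem
  push Not at he_mem
  obtain ⟨ε, hε, hex⟩ := he_mem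
  have hxe : ε • |x| ≤ |e| := (hE.le_total _ _).resolve_left hex
  exact ⟨ε⁻¹, (le_inv_smul_iff_of_pos hε).2 hxe⟩

theorem rank_le_one (hE : BandSimple E) : Module.rank ℝ E ≤ 1 := by
  classical
  have : @Std.Total E (· ≤ ·) := ⟨hE.le_total⟩
  let _ : LinearOrder E := Lattice.toLinearOrder E
  obtain _ | _ := subsingleton_or_nontrivial E
  · simp
  obtain ⟨e, he⟩ := exists_gt (0 : E)
  refine _root_.rank_le_one e fun x => ?_
  obtain ⟨T, hT⟩ := hE.exists_abs_le_smul_abs he.ne' x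
  rw [abs_of_pos he] at hT
  obtain ⟨c, hc⟩ := exists_sub_smul_mem_infinitesimals he hT
  rw [hE.infinitesimals_eq_bot he.ne', Submodule.mem_bot, sub_eq_zero] at hc
  exact ⟨c, hc.symm⟩

end BandSimple

/-- A Riesz space of dimension at least `2` contains a nontrivial principal band. -/
theorem stmt4 {E : Type*} [AddCommGroup E] [Lattice E] [Module ℝ E]
    (hadd : ∀ x y z : E, x ≤ y → x + z ≤ y + z)
    (hsmul : ∀ (c : ℝ) (x : E), 0 ≤ c → 0 ≤ x → 0 ≤ c • x)
    (hdim : 2 ≤ Module.rank ℝ E) :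
    ∃ B : Submodule ℝ E, IsPrincipalBand B ∧ B ≠ ⊥ ∧ B ≠ ⊤ := by
  have : IsOrderedAddMonoid E := { add_le_add_left := fun x y hxy z => hadd x y z hxy }
  have : IsOrderedModule ℝ E := .of_smul_nonneg fun c hc x hx => hsmul c x hc hx
  by_contra! h
  have hE : BandSimple E :=
    bandSimple_of_forall_isPrincipalBand fun B hB => or_iff_not_imp_left.2 (h B hB)
  exact absurd (hdim.trans hE.rank_le_one) (by norm_num)
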